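/- arXiv:0706.0494 — 4 statements merged into one kernel-verified Lean document; each statement's English description precedes it below -/
import Mathlib

section
/- Let R = ⊕_{i≥0} R_i be a commutative ℕ-graded ring that is an integral domain and a graded ℂ-algebra, and let k be a positive integer. Then R is a finitely generated ℂ-algebra if and only if the truncation R_(k) := ⊕_{i≥0} R_{ki} is a finitely generated ℂ-algebra. -/
section Truncation

variable {R A : Type*} [CommRing R] [CommRing A] [Algebra R A]
  {𝒜 : ℕ → Submodule R A} {k : ℕ} {S : Subalgebra R A}

lemma mem_truncation (hS : Subalgebra.toSubmodule S = ⨆ i : ℕ, 𝒜 (k * i))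
    {n : ℕ} (hn : k ∣ n) {a : A} (ha : a ∈ 𝒜 n) : a ∈ S := by
  obtain ⟨i, rfl⟩ := hn
  rw [← Subalgebra.mem_toSubmodule, hS]
  exact Submodule.mem_iSup_of_mem i ha

variable [GradedAlgebra 𝒜]

lemma integral_truncation (hk : 0 < k)
    (hS : Subalgebra.toSubmodule S = ⨆ i : ℕ, 𝒜 (k * i)) : Algebra.IsIntegral S A := by
  refine ⟨fun a ↦ ?_⟩
  induction a using DirectSum.Decomposition.inductionOn 𝒜 with
  | zero => exact isIntegral_zero
  | @homogeneous n a =>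
    have ha : (a : A) ^ k ∈ S :=
      mem_truncation hS ⟨n, rfl⟩ (by simpa using SetLike.pow_mem_graded k a.2)
    exact IsIntegral.of_pow hk (isIntegral_algebraMap (x := (⟨_, ha⟩ : S)))
  | add a b ha hb => exact ha.add hb

lemma truncation_fg_of_finiteType [IsNoetherianRing R] (hk : 0 < k)
    (hS : Subalgebra.toSubmodule S = ⨆ i : ℕ, 𝒜 (k * i)) [Algebra.FiniteType R A] : S.FG := by
  have := integral_truncation hk hS
  have : Algebra.FiniteType S A := .of_restrictScalars_finiteType R S A
  have : Module.Finite S A := Algebra.IsIntegral.finite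
  rw [← S.fg_top]
  exact fg_of_fg_of_fg R S A Algebra.FiniteType.out Module.Finite.fg_top Subtype.val_injective

/-- The part of `A` in degrees congruent to `r` modulo `k` embeds into the truncation, by
multiplication with the `(k - 1)`-th power of one of its nonzero homogeneous elements. -/
lemma span_residue_class_fg [IsDomain A] [IsNoetherianRing S] (hk : 0 < k)
    (hS : Subalgebra.toSubmodule S = ⨆ i : ℕ, 𝒜 (k * i)) (r : ℕ) :
    (Submodule.span S (⋃ i : ℕ, (𝒜 (k * i + r) : Set A))).FG := by
  by_cases h : ∃ i, ∃ m ∈ 𝒜 (k * i + r), m ≠ 0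
  · obtain ⟨j, m, hm, hm0⟩ := h
    have hinj : Function.Injective (LinearMap.mulLeft S (m ^ (k - 1))) :=
      mul_right_injective₀ (pow_ne_zero _ hm0)
    refine Submodule.fg_of_fg_map_injective _ hinj ?_
    have hle : (Submodule.span S (⋃ i : ℕ, (𝒜 (k * i + r) : Set A))).map
        (LinearMap.mulLeft S (m ^ (k - 1))) ≤ LinearMap.range (Algebra.linearMap S A) := by
      rw [Submodule.map_le_iff_le_comap, Submodule.span_le, Set.iUnion_subset_iff]
      intro i x hx
      have hmem : m ^ (k - 1) * x ∈ 𝒜 ((k - 1) • (k * j + r) + (k * i + r)) :=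
        SetLike.mul_mem_graded (SetLike.pow_mem_graded _ hm) hx
      have hdvd : k ∣ (k - 1) • (k * j + r) + (k * i + r) := by
        obtain ⟨l, rfl⟩ := Nat.exists_eq_add_of_lt hk
        exact ⟨l * j + r + i, by simp; ring⟩
      exact ⟨⟨_, mem_truncation hS hdvd hmem⟩, rfl⟩
    have : IsNoetherian S (LinearMap.range (Algebra.linearMap S A)) := inferInstance
    exact isNoetherian_submodule.mp this _ hle
  · push Not at h
    rw [Submodule.span_eq_bot.mpr (by simpa using fun x i hx ↦ h i x hx)]
    exact Submodule.fg_bot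

lemma finite_over_truncation [IsDomain A] [IsNoetherianRing S] (hk : 0 < k)
    (hS : Subalgebra.toSubmodule S = ⨆ i : ℕ, 𝒜 (k * i)) : Module.Finite S A := by
  have htop : ⨆ r : Fin k, Submodule.span S (⋃ i : ℕ, (𝒜 (k * i + r) : Set A)) = ⊤ := by
    refine eq_top_iff.mpr fun a _ ↦ ?_
    induction a using DirectSum.Decomposition.inductionOn 𝒜 with
    | zero => exact zero_mem _
    | @homogeneous n a =>
      refine Submodule.mem_iSup_of_mem ⟨n % k, Nat.mod_lt n hk⟩
        (Submodule.subset_span (Set.mem_iUnion.mpr ⟨n / k, ?_⟩))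
      simpa only [Nat.div_add_mod, SetLike.mem_coe] using a.2
    | add a b ha hb => exact add_mem (ha trivial) (hb trivial)
  exact ⟨htop ▸ Submodule.fg_iSup _ fun r ↦ span_residue_class_fg hk hS r⟩

lemma finiteType_of_truncation_fg [IsDomain A] [IsNoetherianRing R] (hk : 0 < k)
    (hS : Subalgebra.toSubmodule S = ⨆ i : ℕ, 𝒜 (k * i)) (hfg : S.FG) :
    Algebra.FiniteType R A := by
  have : Algebra.FiniteType R S := S.fg_iff_finiteType.mp hfg
  have : IsNoetherianRing S := Algebra.FiniteType.isNoetherianRing R S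
  have := finite_over_truncation hk hS
  exact Algebra.FiniteType.trans (S := S) inferInstance inferInstance

end Truncation

/-- Let `R = ⊕_{i ≥ 0} R_i` be a commutative ℕ-graded ring which is an integral domain and a
graded ℂ-algebra, and let `k` be a positive integer.  Then `R` is a finitely generated
ℂ-algebra if and only if the truncation (Veronese subring) `R_(k) = ⊕_{i ≥ 0} R_{ki}`
is a finitely generated ℂ-algebra.

Here the truncation is formalized as a subalgebra `S` of `R` whose underlying submodule
is the (internal direct) sum `⨆ i, 𝒜 (k * i)` of the graded pieces of degree divisible
by `k`, and `S.FG` says that `S` is finitely generated as a ℂ-algebra. -/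
theorem truncation_finitelyGenerated_iff
    {A : Type*} [CommRing A] [IsDomain A] [Algebra ℂ A]
    (𝒜 : ℕ → Submodule ℂ A) [GradedAlgebra 𝒜]
    (k : ℕ) (hk : 0 < k)
    (S : Subalgebra ℂ A)
    (hS : Subalgebra.toSubmodule S = ⨆ i : ℕ, 𝒜 (k * i)) :
    Algebra.FiniteType ℂ A ↔ S.FG := by
  exact ⟨fun _ ↦ truncation_fg_of_finiteType hk hS, finiteType_of_truncation_fg hk hS⟩
end

section
/- Let R = ⊕_{i≥0} R_i be a commutative ℕ-graded ring that is a graded ℂ-algebra (no domain hypothesis), and let k be a positive integer. If R is a finitely generated ℂ-algebra, then the truncation R_(k) := ⊕_{i≥0} R_{ki} is a finitely generated ℂ-algebra. -/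
/-- A graded algebra is integral over every subalgebra containing all homogeneous elements of
degree divisible by `k`, for a fixed `k > 0`. -/
theorem isIntegral_of_forall_graded_mul_le {R A : Type*} [CommRing R] [CommRing A] [Algebra R A]
    (𝒜 : ℕ → Submodule R A) [GradedAlgebra 𝒜] {k : ℕ} (hk : 0 < k) (S : Subalgebra R A)
    (hS : ∀ i, 𝒜 (k * i) ≤ Subalgebra.toSubmodule S) :
    Algebra.IsIntegral S A := by
  classical
  refine ⟨fun a ↦ ?_⟩
  rw [← DirectSum.sum_support_decompose 𝒜 a]
  refine IsIntegral.sum _ fun i _ ↦ IsIntegral.of_pow hk ?_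
  have hmem : (DirectSum.decompose 𝒜 a i : A) ^ k ∈ S :=
    hS i (SetLike.pow_mem_graded k (DirectSum.decompose 𝒜 a i).2)
  exact isIntegral_algebraMap (x := (⟨_, hmem⟩ : S))

/-- Let `R = ⊕_{i ≥ 0} R_i` be a commutative ℕ-graded ring which is a graded ℂ-algebra
(no domain hypothesis), and let `k` be a positive integer.  If `R` is a finitely
generated ℂ-algebra, then the truncation (Veronese subring) `R_(k) = ⊕_{i ≥ 0} R_{ki}`
is a finitely generated ℂ-algebra.

The truncation is formalized as a subalgebra `S` of `R` whose underlying submodule is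
the (internal direct) sum `⨆ i, 𝒜 (k * i)` of the graded pieces of degree divisible
by `k`, and `S.FG` says that `S` is finitely generated as a ℂ-algebra. -/
theorem truncation_finitelyGenerated_of_finitelyGenerated
    {A : Type*} [CommRing A] [Algebra ℂ A]
    (𝒜 : ℕ → Submodule ℂ A) [GradedAlgebra 𝒜]
    (k : ℕ) (hk : 0 < k)
    (S : Subalgebra ℂ A)
    (hS : Subalgebra.toSubmodule S = ⨆ i : ℕ, 𝒜 (k * i))
    (hfg : Algebra.FiniteType ℂ A) :
    S.FG := by
  have : Algebra.IsIntegral S A :=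
    isIntegral_of_forall_graded_mul_le 𝒜 hk S fun i ↦ hS ▸ le_iSup (fun i ↦ 𝒜 (k * i)) i
  have : Algebra.FiniteType S A := .of_restrictScalars_finiteType ℂ S A
  have : Module.Finite S A := Algebra.IsIntegral.finite
  exact (Subalgebra.fg_top S).mp
    (fg_of_fg_of_fg ℂ S A hfg.out Module.Finite.fg_top Subtype.val_injective)
end

section
/- Let m : ℕ → ℕ be a superadditive sequence (m_{i+j} ≥ m_i + m_j for all i, j ≥ 1), set d_i := m_i/i ∈ ℝ for i ≥ 1, assume the set {d_i : i ≥ 1} is bounded above, and let d := sup_{i≥1} d_i. Suppose there exists a real number b < 1 such that ⌈ j·d_i − b ⌉ ≤ j·d_j for all integers i ≥ j ≥ 1 (the saturation condition). Then d is a rational number. -/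
/-- For irrational `d` and `b < 1`, no integer sequence satisfies `j * d - b ≤ a j ≤ j * d` for all
`j ≥ 1`, because the fractional parts of `j * d` come arbitrarily close to `1`. -/
lemma Irrational.exists_nat_forall_int_lt {d b : ℝ} (hirr : Irrational d) (hb : b < 1) :
    ∃ j : ℕ, 1 ≤ j ∧ ∀ a : ℤ, (a : ℝ) ≤ j * d → (a : ℝ) < j * d - b := by
  obtain ⟨n, hn⟩ := exists_nat_one_div_lt (sub_pos.2 hb)
  obtain ⟨k, hk, -, hkd⟩ := Real.exists_nat_abs_mul_sub_round_le d n.succ_pos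
  obtain ⟨p, hp⟩ : ∃ p : ℤ, p = round ((k : ℝ) * d) := ⟨_, rfl⟩
  obtain ⟨δ, hδ⟩ : ∃ δ : ℝ, δ = k * d - p := ⟨_, rfl⟩
  rw [← hp, ← hδ] at hkd
  have hn0 : (0 : ℝ) ≤ n := n.cast_nonneg
  have hlt : 1 / (((n + 1 : ℕ) : ℝ) + 1) < 1 / ((n : ℝ) + 1) := by
    push_cast
    exact one_div_lt_one_div_of_lt (by positivity) (by linarith)
  have hle : 1 / ((n : ℝ) + 1) ≤ 1 := by
    rw [div_le_one (by positivity)]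
    linarith
  have habs := abs_le.1 hkd
  have hδ0 : δ ≠ 0 := by
    rw [hδ]
    exact ((hirr.natCast_mul hk.ne').sub_intCast p).ne_zero
  rcases hδ0.lt_or_gt with hneg | hpos
  · refine ⟨k, hk, fun a ha => ?_⟩
    have hap : a < p := by
      have : (a : ℝ) < p := by linarith
      exact_mod_cast this
    have hap' : (a : ℝ) + 1 ≤ p := by exact_mod_cast hap
    linarith
  · have hδ1 : δ < 1 := by linarith
    obtain ⟨N, hN⟩ : ∃ N : ℕ, ⌈1 / δ⌉₊ = N + 1 :=
      Nat.exists_eq_add_one.2 (Nat.ceil_pos.2 (by positivity))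
    have hup : 1 ≤ ((N : ℝ) + 1) * δ := by
      have := Nat.le_ceil (1 / δ)
      rw [hN, div_le_iff₀ hpos] at this
      exact_mod_cast this
    have hlow : (N : ℝ) * δ < 1 := by
      rw [← lt_div_iff₀ hpos]
      exact Nat.lt_ceil.1 (by omega)
    have hN0 : N ≠ 0 := by
      rintro rfl
      norm_num at hup
      linarith
    refine ⟨N * k, Nat.mul_pos (Nat.pos_of_ne_zero hN0) hk, fun a ha => ?_⟩
    have hexp : ((N * k : ℕ) : ℝ) * d = N * p + N * δ := by
      rw [hδ]
      push_cast
      ring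
    rw [hexp] at ha ⊢
    have hap : a < N * p + 1 := by
      have : (a : ℝ) < N * p + 1 := by linarith
      exact_mod_cast this
    have hap' : (a : ℝ) ≤ N * p := by exact_mod_cast Int.lt_add_one_iff.1 hap
    linarith

/-- A superadditive sequence satisfies `k * m i ≤ m (k * i)`. -/
lemma mul_le_of_superadditive {m : ℕ → ℕ}
    (hsuper : ∀ i j : ℕ, 1 ≤ i → 1 ≤ j → m i + m j ≤ m (i + j)) {i k : ℕ}
    (hi : 1 ≤ i) (hk : 1 ≤ k) : k * m i ≤ m (k * i) := by
  induction k, hk using Nat.le_induction with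
  | base => simp
  | succ k hk ih =>
    have := hsuper (k * i) i (Nat.mul_pos hk hi) hi
    rw [add_one_mul, add_one_mul]
    omega

/-- Shokurov: the limit of an a-saturated adjoint algebra on an affine
curve is rational.
Let `m : ℕ → ℕ` be superadditive (`m i + m j ≤ m (i+j)` for `i, j ≥ 1`), set
`d_i := m_i / i ∈ ℝ` for `i ≥ 1`, assume `{d_i : i ≥ 1}` is bounded above, and let
`d := sup_{i ≥ 1} d_i`.  Suppose there is a real number `b < 1` such that
`⌈ j·d_i − b ⌉ ≤ j·d_j` for all integers `i ≥ j ≥ 1` (the saturation condition).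
Then `d` is a rational number. -/
theorem sup_rational_of_saturated
    (m : ℕ → ℕ)
    (hsuper : ∀ i j : ℕ, 1 ≤ i → 1 ≤ j → m i + m j ≤ m (i + j))
    (hbdd : BddAbove {x : ℝ | ∃ i : ℕ, 1 ≤ i ∧ x = (m i : ℝ) / (i : ℝ)})
    (d : ℝ) (hd : d = sSup {x : ℝ | ∃ i : ℕ, 1 ≤ i ∧ x = (m i : ℝ) / (i : ℝ)})
    (b : ℝ) (hb : b < 1)
    (hsat : ∀ i j : ℕ, 1 ≤ j → j ≤ i →
      ((⌈(j : ℝ) * ((m i : ℝ) / (i : ℝ)) - b⌉ : ℤ) : ℝ) ≤ (j : ℝ) * ((m j : ℝ) / (j : ℝ))) :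
    ¬ Irrational d := by
  intro hirr
  obtain ⟨j, hj, hfar⟩ := hirr.exists_nat_forall_int_lt hb
  have hj0 : (0 : ℝ) < j := by exact_mod_cast hj
  have hupper : (m j : ℝ) ≤ j * d := by
    have : (m j : ℝ) / j ≤ d := hd ▸ le_csSup hbdd ⟨j, hj, rfl⟩
    rwa [div_le_iff₀' hj0] at this
  have hlower : d ≤ (m j + b) / j := by
    rw [hd]
    refine csSup_le ⟨_, 1, le_rfl, rfl⟩ ?_
    rintro _ ⟨i, hi, rfl⟩
    have hi0 : (0 : ℝ) < i := by exact_mod_cast hi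
    have hmul : (j : ℝ) * m i ≤ m (j * i) := by
      exact_mod_cast mul_le_of_superadditive hsuper hi hj
    have hslope : (m i : ℝ) / i ≤ m (j * i) / ((j * i : ℕ) : ℝ) := by
      push_cast
      rw [div_le_div_iff₀ hi0 (by positivity)]
      nlinarith
    have hceil := (Int.le_ceil _).trans (hsat (j * i) j hj (Nat.le_mul_of_pos_right j hi))
    rw [mul_div_cancel₀ _ hj0.ne'] at hceil
    rw [le_div_iff₀' hj0]
    have := mul_le_mul_of_nonneg_left hslope hj0.le
    linarith
  rw [le_div_iff₀' hj0] at hlower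
  have := hfar (m j) (by exact_mod_cast hupper)
  push_cast at this
  linarith
end

section
/- Let m : ℕ → ℕ be a superadditive sequence (m_{i+j} ≥ m_i + m_j for all i, j ≥ 1), set d_i := m_i/i ∈ ℝ for i ≥ 1, assume the set {d_i : i ≥ 1} is bounded above, and let d := sup_{i≥1} d_i. Suppose there exists a real number b < 1 such that ⌈ j·d_i − b ⌉ ≤ j·d_j for all integers i ≥ j ≥ 1 (the saturation condition). Then for every integer j ≥ 1 such that j·d is an integer, one has d_j = d, i.e. m_j = j·d. -/
/-- A superadditive sequence satisfies `k * m i ≤ m (k * i)` for `k, i ≥ 1`. -/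
theorem mul_apply_le_apply_mul_of_superadditive (m : ℕ → ℕ)
    (hsuper : ∀ i j : ℕ, 1 ≤ i → 1 ≤ j → m i + m j ≤ m (i + j))
    {i : ℕ} (hi : 1 ≤ i) {k : ℕ} (hk : 1 ≤ k) : k * m i ≤ m (k * i) := by
  induction k, hk using Nat.le_induction with
  | base => simp
  | succ k hk ih =>
    have h := hsuper (k * i) i (Nat.mul_pos hk hi) hi
    rw [add_mul, add_mul, one_mul, one_mul]
    omega

/-- Shokurov: an a-saturated adjoint algebra on an affine curve
stabilizes at divisible indices.
Let `m : ℕ → ℕ` be superadditive (`m i + m j ≤ m (i+j)` for `i, j ≥ 1`), set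
`d_i := m_i / i ∈ ℝ` for `i ≥ 1`, assume `{d_i : i ≥ 1}` is bounded above, and let
`d := sup_{i ≥ 1} d_i`.  Suppose there is a real number `b < 1` such that
`⌈ j·d_i − b ⌉ ≤ j·d_j` for all integers `i ≥ j ≥ 1` (the saturation condition).
Then for every integer `j ≥ 1` such that `j·d` is an integer, one has `d_j = d`,
i.e. `m_j = j·d`. -/
theorem apply_eq_of_mul_sup_integer
    (m : ℕ → ℕ)
    (hsuper : ∀ i j : ℕ, 1 ≤ i → 1 ≤ j → m i + m j ≤ m (i + j))
    (hbdd : BddAbove {x : ℝ | ∃ i : ℕ, 1 ≤ i ∧ x = (m i : ℝ) / (i : ℝ)})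
    (d : ℝ) (hd : d = sSup {x : ℝ | ∃ i : ℕ, 1 ≤ i ∧ x = (m i : ℝ) / (i : ℝ)})
    (b : ℝ) (hb : b < 1)
    (hsat : ∀ i j : ℕ, 1 ≤ j → j ≤ i →
      ((⌈(j : ℝ) * ((m i : ℝ) / (i : ℝ)) - b⌉ : ℤ) : ℝ) ≤ (j : ℝ) * ((m j : ℝ) / (j : ℝ))) :
    ∀ j : ℕ, 1 ≤ j → (∃ n : ℤ, (j : ℝ) * d = (n : ℝ)) → (m j : ℝ) = (j : ℝ) * d := by
  rintro j hj ⟨n, hn⟩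
  have hj0 : (0 : ℝ) < j := by exact_mod_cast hj
  have hle : (m j : ℝ) ≤ j * d := by
    have h : (m j : ℝ) / j ≤ d := hd ▸ le_csSup hbdd ⟨j, hj, rfl⟩
    rwa [div_le_iff₀' hj0] at h
  refine le_antisymm hle ?_
  have hlt : d - (1 - b) / j < sSup {x : ℝ | ∃ i : ℕ, 1 ≤ i ∧ x = (m i : ℝ) / (i : ℝ)} := by
    rw [← hd]
    exact sub_lt_self d (div_pos (by linarith) hj0)
  obtain ⟨_, ⟨i, hi, rfl⟩, hdi⟩ := exists_lt_of_lt_csSup (by exact ⟨_, 1, le_rfl, rfl⟩) hlt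
  have hi0 : (0 : ℝ) < i := by exact_mod_cast hi
  have hmul : (j : ℝ) * m i ≤ m (j * i) := by
    exact_mod_cast mul_apply_le_apply_mul_of_superadditive m hsuper hi hj
  -- Replacing `i` by `j * i` makes the index at least `j` without decreasing `d_i`.
  have hmono : (j : ℝ) * (m i / i) ≤ j * (m (j * i) / (j * i : ℕ)) := by
    refine mul_le_mul_of_nonneg_left ?_ hj0.le
    rw [← mul_div_mul_left (m i : ℝ) i hj0.ne', Nat.cast_mul]
    gcongr
  have hclose : (j : ℝ) * d - (1 - b) < j * (m i / i) := by
    have h := mul_lt_mul_of_pos_left hdi hj0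
    rwa [mul_sub, mul_div_cancel₀ _ hj0.ne'] at h
  have hceil : n ≤ ⌈(j : ℝ) * (m (j * i) / (j * i : ℕ)) - b⌉ := by
    rw [← Int.sub_one_lt_iff, Int.lt_ceil]
    push_cast at hmono ⊢
    linarith
  have hsat_j := hsat (j * i) j hj (Nat.le_mul_of_pos_right j hi)
  rw [mul_div_cancel₀ _ hj0.ne'] at hsat_j
  rw [hn]
  exact (Int.cast_le.mpr hceil).trans hsat_j
end
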